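/- Instance-dependent approximation bound (finite-horizon error accumulation): suppose all reward distributions of the MDP are supported on [R_min, R_max], and let η^π be the unique fixed point of T^π. Then for any λ ∈ [0,1]^{X×[m]} and any k ≥ 1, w̄_1((Π^λ T^π)^k η^π, η^π) ≤ (V_max − V_min)(1 − γ^k) / (2m(1−γ)), where V_max = R_max/(1−γ) and V_min = R_min/(1−γ). In particular, if the QDP fixed point satisfies η̂^π_λ = (Π^λ T^π)^k η^π (as holds when, after k time steps, all encountered transition and reward distributions along any trajectory are Dirac deltas), then w̄_1(η̂^π_λ, η^π) ≤ (V_max − V_min)(1 − γ^k) / (2m(1−γ)). -/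

import Mathlib

open MeasureTheory ProbabilityTheory Set
open scoped ENNReal

/-- Generalized inverse CDF (least τ-quantile). -/
noncomputable def invCDF (ν : Measure ℝ) (τ : ℝ) : ℝ := sInf {y | τ ≤ cdf ν y}

/-- Upper inverse CDF (greatest τ-quantile). -/
noncomputable def upInvCDF (ν : Measure ℝ) (τ : ℝ) : ℝ := sInf {y | τ < cdf ν y}

/-- Quantile level τ_i = (2i-1)/(2m), with `i : Fin m` zero-indexed. -/
noncomputable def qlevel (m : ℕ) (i : Fin m) : ℝ := (2 * (i : ℝ) + 1) / (2 * m)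

/-- The uniform m-atom distribution with the given particle locations. -/
noncomputable def paramDistOne {m : ℕ} (θ : Fin m → ℝ) : Measure ℝ :=
  (m : ℝ≥0∞)⁻¹ • ∑ i : Fin m, Measure.dirac (θ i)

/-- Return-distribution function associated with quantile parameters θ. -/
noncomputable def paramDist {X : Type*} {m : ℕ} (θ : X → Fin m → ℝ) : X → Measure ℝ :=
  fun x => paramDistOne (θ x)

/-- The distributional Bellman operator T^π. -/
noncomputable def bellman {X : Type*} [MeasurableSpace X]
    (P : X → Measure (ℝ × X)) (γ : ℝ) (η : X → Measure ℝ) : X → Measure ℝ :=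
  fun x => (P x).bind (fun p => (η p.2).map (fun z => p.1 + γ * z))

/-- The quantile projection Π^λ, parameter-level output. -/
noncomputable def projParam {X : Type*} {m : ℕ} (lam : X → Fin m → ℝ)
    (η : X → Measure ℝ) : X → Fin m → ℝ :=
  fun x i => (1 - lam x i) * invCDF (η x) (qlevel m i) + lam x i * upInvCDF (η x) (qlevel m i)

/-- The quantile projection Π^λ on return-distribution functions. -/
noncomputable def proj {X : Type*} {m : ℕ} (lam : X → Fin m → ℝ)
    (η : X → Measure ℝ) : X → Measure ℝ :=
  paramDist (projParam lam η)

/-- The projected distributional Bellman operator Π^λ T^π acting on parameters. -/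
noncomputable def projBellmanParam {X : Type*} [MeasurableSpace X]
    (P : X → Measure (ℝ × X)) (γ : ℝ) {m : ℕ} (lam : X → Fin m → ℝ)
    (θ : X → Fin m → ℝ) : X → Fin m → ℝ :=
  projParam lam (bellman P γ (paramDist θ))

/-- The cube [0,1]^{X×[m]} of interpolation parameters. -/
def unitCube (X : Type*) (m : ℕ) : Set (X → Fin m → ℝ) :=
  {lam | ∀ x i, lam x i ∈ Set.Icc (0:ℝ) 1}

/-- Wasserstein-∞ distance (valued in [0,∞]). -/
noncomputable def winf (ν ν' : Measure ℝ) : ℝ≥0∞ :=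
  ⨆ t : Set.Ioo (0:ℝ) 1, ENNReal.ofReal |invCDF ν t - invCDF ν' t|

/-- Extension of w∞ to return-distribution functions: max over states. -/
noncomputable def wbar {X : Type*} (η η' : X → Measure ℝ) : ℝ≥0∞ :=
  ⨆ x : X, winf (η x) (η' x)

/-- Wasserstein-1 distance between probability distributions on ℝ. -/
noncomputable def w1 (ν ν' : Measure ℝ) : ℝ :=
  ∫ t in Set.Ioo (0:ℝ) 1, |invCDF ν t - invCDF ν' t|

/-- Uniform m-atom distributions. -/
noncomputable def FQ (m : ℕ) : Set (Measure ℝ) :=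
  {ν | ∃ z : Fin m → ℝ, ν = paramDistOne z}

section Quantiles

lemma invCDF_le_iff (ν : Measure ℝ) {t : ℝ} (ht : t ∈ Ioo (0 : ℝ) 1) (y : ℝ) :
    invCDF ν t ≤ y ↔ t ≤ cdf ν y := by
  obtain ⟨a, ha⟩ := ((tendsto_cdf_atBot ν).eventually (gt_mem_nhds ht.1)).exists
  obtain ⟨b, hb⟩ := ((tendsto_cdf_atTop ν).eventually (lt_mem_nhds ht.2)).exists
  have hbdd : BddBelow {z | t ≤ cdf ν z} :=
    ⟨a, fun z hz => le_of_not_gt fun hza => (hz.trans (monotone_cdf ν hza.le)).not_gt ha⟩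
  refine ⟨fun h => ?_, fun h => csInf_le hbdd h⟩
  refine ge_of_tendsto
    (((cdf ν).right_continuous y).tendsto.mono_left (nhdsWithin_mono y Ioi_subset_Ici_self)) ?_
  filter_upwards [self_mem_nhdsWithin] with z hz
  obtain ⟨w, hw, hwz⟩ := exists_lt_of_csInf_lt ⟨b, hb.le⟩ (h.trans_lt hz)
  exact hw.trans (monotone_cdf ν hwz.le)

lemma upInvCDF_le_of_lt_cdf (ν : Measure ℝ) {t : ℝ} (ht : 0 < t) {y : ℝ} (h : t < cdf ν y) :
    upInvCDF ν t ≤ y := by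
  obtain ⟨a, ha⟩ := ((tendsto_cdf_atBot ν).eventually (gt_mem_nhds ht)).exists
  exact csInf_le ⟨a, fun z hz => le_of_not_gt fun hza =>
    (hz.le.trans (monotone_cdf ν hza.le)).not_gt ha⟩ h

lemma invCDF_le_upInvCDF (ν : Measure ℝ) {t : ℝ} (ht : t ∈ Ioo (0 : ℝ) 1) :
    invCDF ν t ≤ upInvCDF ν t := by
  obtain ⟨b, hb⟩ := ((tendsto_cdf_atTop ν).eventually (lt_mem_nhds ht.2)).exists
  exact le_csInf ⟨b, hb⟩ fun z hz => (invCDF_le_iff ν ht z).2 (le_of_lt hz)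

lemma qlevel_mem_Ioo {m : ℕ} (i : Fin m) : qlevel m i ∈ Ioo (0 : ℝ) 1 := by
  have hi : (i : ℝ) + 1 ≤ m := by exact_mod_cast i.2
  have hm : (0 : ℝ) < 2 * m := by linarith [(Nat.cast_nonneg i : (0 : ℝ) ≤ (i : ℕ))]
  unfold qlevel
  exact ⟨by positivity, by rw [div_lt_one hm]; linarith⟩

lemma qlevel_le_cdf_of_projParam_le {X : Type*} {m : ℕ} {lam : X → Fin m → ℝ}
    (hlam : lam ∈ unitCube X m) (η : X → Measure ℝ) {x : X} {i : Fin m} {y : ℝ}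
    (h : projParam lam η x i ≤ y) : qlevel m i ≤ cdf (η x) y := by
  rw [← invCDF_le_iff _ (qlevel_mem_Ioo i)]
  refine le_trans ?_ h
  unfold projParam
  nlinarith [(hlam x i).1, invCDF_le_upInvCDF (η x) (qlevel_mem_Ioo i)]

lemma projParam_le_of_qlevel_lt_cdf {X : Type*} {m : ℕ} {lam : X → Fin m → ℝ}
    (hlam : lam ∈ unitCube X m) (η : X → Measure ℝ) {x : X} {i : Fin m} {y : ℝ}
    (h : qlevel m i < cdf (η x) y) : projParam lam η x i ≤ y := by
  refine le_trans ?_ (upInvCDF_le_of_lt_cdf (η x) (qlevel_mem_Ioo i).1 h)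
  unfold projParam
  nlinarith [(hlam x i).2, invCDF_le_upInvCDF (η x) (qlevel_mem_Ioo i)]

end Quantiles

section UniformAtoms

lemma isProbabilityMeasure_paramDistOne {m : ℕ} (hm : 0 < m) (θ : Fin m → ℝ) :
    IsProbabilityMeasure (paramDistOne θ) := by
  constructor
  simp only [paramDistOne, Measure.smul_apply, Measure.finsetSum_apply, measure_univ,
    Finset.sum_const, Finset.card_univ, Fintype.card_fin, smul_eq_mul, nsmul_eq_mul, mul_one]
  exact ENNReal.inv_mul_cancel (by exact_mod_cast hm.ne') (by simp)

lemma cdf_paramDistOne {m : ℕ} (hm : 0 < m) (θ : Fin m → ℝ) (y : ℝ) :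
    cdf (paramDistOne θ) y = (Finset.univ.filter fun i => θ i ≤ y).card / (m : ℝ) := by
  have := isProbabilityMeasure_paramDistOne hm θ
  rw [cdf_eq_real, measureReal_def]
  simp only [paramDistOne, Measure.smul_apply, Measure.finsetSum_apply, smul_eq_mul,
    Measure.dirac_apply' _ measurableSet_Iic, indicator_apply, mem_Iic, Pi.one_apply,
    Finset.sum_boole, ENNReal.toReal_mul, ENNReal.toReal_inv, ENNReal.toReal_natCast]
  ring

lemma card_le_of_forall_le {m : ℕ} (s : Finset (Fin m)) {c : ℝ} (hc : 0 ≤ c + 1)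
    (h : ∀ i ∈ s, (i : ℝ) ≤ c) : (s.card : ℝ) ≤ c + 1 := by
  rcases s.eq_empty_or_nonempty with rfl | hs
  · simpa using hc
  · have hsub : s ⊆ Finset.Iic (s.max' hs) := fun i hi => Finset.mem_Iic.2 (s.le_max' i hi)
    have hcard := Finset.card_le_card hsub
    rw [Fin.card_Iic] at hcard
    have hcast : (s.card : ℝ) ≤ ((s.max' hs : Fin m) : ℕ) + 1 := by exact_mod_cast hcard
    linarith [h _ (s.max'_mem hs)]

lemma card_le_of_forall_ge {m : ℕ} (s : Finset (Fin m)) {c : ℝ} (hc : c ≤ m)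
    (h : ∀ i ∈ s, c ≤ (i : ℝ)) : (s.card : ℝ) ≤ m - c := by
  rcases s.eq_empty_or_nonempty with rfl | hs
  · simpa using hc
  · have hsub : s ⊆ Finset.Ici (s.min' hs) := fun i hi => Finset.mem_Ici.2 (s.min'_le i hi)
    have hcard := Finset.card_le_card hsub
    rw [Fin.card_Ici] at hcard
    have hadd : s.card + ((s.min' hs : Fin m) : ℕ) ≤ m := by have := (s.min' hs).2; omega
    have hcast : (s.card : ℝ) + ((s.min' hs : Fin m) : ℕ) ≤ m := by exact_mod_cast hadd
    linarith [h _ (s.min'_mem hs)]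

variable {X : Type*} {m : ℕ} {lam : X → Fin m → ℝ}

/-- The quantile projection moves the CDF by at most half a quantile step, uniformly. -/
lemma abs_cdf_proj_sub_cdf_le (hm : 0 < m) (hlam : lam ∈ unitCube X m) (η : X → Measure ℝ)
    (x : X) (y : ℝ) : |cdf (proj lam η x) y - cdf (η x) y| ≤ 1 / (2 * m) := by
  have hm' : (0 : ℝ) < m := by exact_mod_cast hm
  set F := cdf (η x) y with hF
  have hF0 : 0 ≤ F := cdf_nonneg _ _
  have hF1 : F ≤ 1 := cdf_le_one _ _
  have hupper := card_le_of_forall_le (Finset.univ.filter fun i => projParam lam η x i ≤ y)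
    (c := m * F - 1 / 2) (by nlinarith) fun i hi => by
      have hq := qlevel_le_cdf_of_projParam_le hlam η (Finset.mem_filter.1 hi).2
      rw [qlevel, div_le_iff₀ (by positivity), ← hF] at hq
      linarith
  have hlower := card_le_of_forall_ge (Finset.univ.filter fun i => ¬ projParam lam η x i ≤ y)
    (c := m * F - 1 / 2) (by nlinarith) fun i hi => by
      have hq := not_lt.1
        (mt (projParam_le_of_qlevel_lt_cdf hlam η) (Finset.mem_filter.1 hi).2)
      rw [qlevel, le_div_iff₀ (by positivity), ← hF] at hq
      linarith
  have hsum := Finset.card_filter_add_card_filter_not (s := (Finset.univ : Finset (Fin m)))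
    (fun i => projParam lam η x i ≤ y)
  rw [Finset.card_univ, Fintype.card_fin] at hsum
  have hsum' : ((Finset.univ.filter fun i => projParam lam η x i ≤ y).card : ℝ)
      + (Finset.univ.filter fun i => ¬ projParam lam η x i ≤ y).card = m := by
    exact_mod_cast hsum
  rw [proj, paramDist, cdf_paramDistOne hm]
  generalize ((Finset.univ.filter fun i => projParam lam η x i ≤ y).card : ℝ) = N at *
  have hdiff : N / m - F = (N - m * F) / m := by field_simp
  rw [hdiff, abs_div, abs_of_pos hm', div_le_div_iff₀ hm' (by positivity)]
  have : |N - m * F| ≤ 1 / 2 := abs_le.2 ⟨by linarith, by linarith⟩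
  nlinarith

lemma cdf_proj_eq_zero (hm : 0 < m) (hlam : lam ∈ unitCube X m) (η : X → Measure ℝ)
    {x : X} {y : ℝ} (h : cdf (η x) y = 0) : cdf (proj lam η x) y = 0 := by
  rw [proj, paramDist, cdf_paramDistOne hm, Finset.filter_false_of_mem]
  · simp
  · intro i _ hi
    have := qlevel_le_cdf_of_projParam_le hlam η hi
    linarith [(qlevel_mem_Ioo i).1]

lemma cdf_proj_eq_one (hm : 0 < m) (hlam : lam ∈ unitCube X m) (η : X → Measure ℝ)
    {x : X} {y : ℝ} (h : cdf (η x) y = 1) : cdf (proj lam η x) y = 1 := by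
  have hm' : (m : ℝ) ≠ 0 := by exact_mod_cast hm.ne'
  rw [proj, paramDist, cdf_paramDistOne hm, Finset.filter_true_of_mem]
  · simp [hm']
  · intro i _
    exact projParam_le_of_qlevel_lt_cdf hlam η (by rw [h]; exact (qlevel_mem_Ioo i).2)

lemma cdf_eq_zero_of_lt {ν : Measure ℝ} [IsProbabilityMeasure ν] {a b y : ℝ}
    (h : ν (Icc a b)ᶜ = 0) (hy : y < a) : cdf ν y = 0 := by
  have hnull : ν (Iic y) = 0 :=
    measure_mono_null (t := (Icc a b)ᶜ)
      (fun z (hz : z ≤ y) (hz' : z ∈ Icc a b) => (hz.trans_lt hy).not_ge hz'.1) h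
  rw [cdf_eq_real, measureReal_def, hnull, ENNReal.toReal_zero]

lemma cdf_eq_one_of_le {ν : Measure ℝ} [IsProbabilityMeasure ν] {a b y : ℝ}
    (h : ν (Icc a b)ᶜ = 0) (hy : b ≤ y) : cdf ν y = 1 := by
  have hnull : ν (Iic y)ᶜ = 0 :=
    measure_mono_null (t := (Icc a b)ᶜ)
      (fun z hz (hz' : z ∈ Icc a b) => hz (hz'.2.trans hy)) h
  rw [cdf_eq_real, measureReal_def, (prob_compl_eq_zero_iff measurableSet_Iic).1 hnull,
    ENNReal.toReal_one]

lemma measure_compl_Icc_eq_zero {ν : Measure ℝ} [IsProbabilityMeasure ν] {a b : ℝ}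
    (ha : ∀ y < a, cdf ν y = 0) (hb : cdf ν b = 1) : ν (Icc a b)ᶜ = 0 := by
  have hlow : ν (Iio a) = 0 := by
    have hν := measure_cdf ν
    have hlim : Function.leftLim (cdf ν) a = 0 := by
      refine tendsto_nhds_unique ((cdf ν).mono.tendsto_leftLim a) ?_
      refine tendsto_const_nhds.congr' ?_
      filter_upwards [self_mem_nhdsWithin] with y hy
      exact (ha y hy).symm
    rw [← hν, StieltjesFunction.measure_Iio _ (tendsto_cdf_atBot ν), hlim]
    simp
  have hhigh : ν (Iic b)ᶜ = 0 := by
    rw [prob_compl_eq_zero_iff measurableSet_Iic, ← ofReal_cdf, hb, ENNReal.ofReal_one]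
  refine measure_mono_null (fun z hz => ?_) (measure_union_null hlow hhigh)
  by_contra hcon
  simp only [mem_union, mem_Iio, mem_compl_iff, mem_Iic, not_or, not_lt, not_not] at hcon
  exact hz hcon

lemma proj_compl_Icc_eq_zero (hm : 0 < m) (hlam : lam ∈ unitCube X m) (η : X → Measure ℝ)
    (x : X) [IsProbabilityMeasure (η x)] {a b : ℝ} (h : η x (Icc a b)ᶜ = 0) :
    proj lam η x (Icc a b)ᶜ = 0 := by
  have : IsProbabilityMeasure (proj lam η x) := isProbabilityMeasure_paramDistOne hm _
  exact measure_compl_Icc_eq_zero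
    (fun y hy => cdf_proj_eq_zero hm hlam η (cdf_eq_zero_of_lt h hy))
    (cdf_proj_eq_one hm hlam η (cdf_eq_one_of_le h le_rfl))

end UniformAtoms

section CDFDistance

/-- The `L¹` distance between cumulative distribution functions. -/
noncomputable def cdfDist (ν ν' : Measure ℝ) : ℝ≥0∞ :=
  ∫⁻ y, ENNReal.ofReal |cdf ν y - cdf ν' y|

lemma measurable_cdf_apply (ν : Measure ℝ) : Measurable fun y => cdf ν y :=
  (monotone_cdf ν).measurable

lemma cdfDist_self (ν : Measure ℝ) : cdfDist ν ν = 0 := by simp [cdfDist]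

lemma cdfDist_triangle (ν₁ ν₂ ν₃ : Measure ℝ) :
    cdfDist ν₁ ν₃ ≤ cdfDist ν₁ ν₂ + cdfDist ν₂ ν₃ := by
  have hmeas : Measurable fun y => ENNReal.ofReal |cdf ν₁ y - cdf ν₂ y| :=
    (((measurable_cdf_apply ν₁).sub (measurable_cdf_apply ν₂)).norm).ennreal_ofReal
  rw [cdfDist, cdfDist, cdfDist, ← lintegral_add_left hmeas]
  refine lintegral_mono fun y => ?_
  rw [← ENNReal.ofReal_add (abs_nonneg _) (abs_nonneg _)]
  exact ENNReal.ofReal_le_ofReal (abs_sub_le _ _ _)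

lemma ofReal_abs_sub_eq_volume (a b : ℝ) :
    ENNReal.ofReal |a - b| = volume {y : ℝ | ¬(a ≤ y ↔ b ≤ y)} := by
  have hset : {y : ℝ | ¬(a ≤ y ↔ b ≤ y)} = Ico (min a b) (max a b) := by
    ext y
    simp only [mem_ofPred_eq, mem_Ico, min_le_iff, lt_max_iff]
    rw [← not_le, ← not_le]
    tauto
  rw [hset, Real.volume_Ico, max_sub_min_eq_abs']

lemma lintegral_invCDF_sub_le_cdfDist (ν ν' : Measure ℝ) :
    ∫⁻ t in Ioo (0 : ℝ) 1, ENNReal.ofReal |invCDF ν t - invCDF ν' t| ≤ cdfDist ν ν' := by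
  set S : Set (ℝ × ℝ) := {p | ¬(p.1 ≤ cdf ν p.2 ↔ p.1 ≤ cdf ν' p.2)} with hS
  have hmeas : ∀ μ : Measure ℝ, MeasurableSet {p : ℝ × ℝ | p.1 ≤ cdf μ p.2} := fun μ =>
    measurableSet_le measurable_fst ((measurable_cdf_apply μ).comp measurable_snd)
  have hSm : MeasurableSet S := ((hmeas ν).iff (hmeas ν')).compl
  calc ∫⁻ t in Ioo (0 : ℝ) 1, ENNReal.ofReal |invCDF ν t - invCDF ν' t|
      = ∫⁻ t in Ioo (0 : ℝ) 1, volume (Prod.mk t ⁻¹' S) := by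
        refine setLIntegral_congr_fun measurableSet_Ioo fun t ht => ?_
        simp only [ofReal_abs_sub_eq_volume, invCDF_le_iff _ ht]
        rfl
    _ = ∫⁻ y, (volume.restrict (Ioo (0 : ℝ) 1)) ((fun t => (t, y)) ⁻¹' S) := by
        rw [← Measure.prod_apply hSm, Measure.prod_apply_symm hSm]
    _ ≤ cdfDist ν ν' := by
        refine lintegral_mono fun y => (Measure.restrict_apply_le _ _).trans ?_
        have hsub : (fun t => (t, y)) ⁻¹' S
            ⊆ Ioc (min (cdf ν y) (cdf ν' y)) (max (cdf ν y) (cdf ν' y)) := by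
          intro t ht
          simp only [hS, mem_preimage, mem_ofPred_eq] at ht
          simp only [mem_Ioc, min_lt_iff, le_max_iff]
          rw [← not_le, ← not_le]
          tauto
        refine (measure_mono hsub).trans ?_
        rw [Real.volume_Ioc, max_sub_min_eq_abs']

lemma w1_le_of_cdfDist_le {ν ν' : Measure ℝ} {c : ℝ} (hc : 0 ≤ c)
    (h : cdfDist ν ν' ≤ ENNReal.ofReal c) : w1 ν ν' ≤ c := by
  refine (Real.le_norm_self _).trans ((norm_integral_le_lintegral_norm _).trans ?_)
  refine ENNReal.toReal_le_of_le_ofReal hc (le_trans ?_ h)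
  simpa using lintegral_invCDF_sub_le_cdfDist ν ν'

lemma cdfDist_proj_le {X : Type*} {m : ℕ} {lam : X → Fin m → ℝ} (hm : 0 < m)
    (hlam : lam ∈ unitCube X m) (η : X → Measure ℝ) (x : X) [IsProbabilityMeasure (η x)]
    {a b : ℝ} (h : η x (Icc a b)ᶜ = 0) :
    cdfDist (proj lam η x) (η x) ≤ ENNReal.ofReal ((b - a) / (2 * m)) := by
  calc cdfDist (proj lam η x) (η x)
      ≤ ∫⁻ y, (Ico a b).indicator (fun _ => ENNReal.ofReal (1 / (2 * m))) y := by
        refine lintegral_mono fun y => ?_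
        by_cases hy : y ∈ Ico a b
        · rw [indicator_of_mem hy]
          exact ENNReal.ofReal_le_ofReal (abs_cdf_proj_sub_cdf_le hm hlam η x y)
        · rw [indicator_of_notMem hy]
          rcases lt_or_ge y a with hya | hya
          · have h0 := cdf_eq_zero_of_lt h hya
            simp [h0, cdf_proj_eq_zero hm hlam η h0]
          · have h1 := cdf_eq_one_of_le h (not_lt.1 fun hyb => hy ⟨hya, hyb⟩)
            simp [h1, cdf_proj_eq_one hm hlam η h1]
    _ = ENNReal.ofReal ((b - a) / (2 * m)) := by
        rw [lintegral_indicator_const measurableSet_Ico, Real.volume_Ico,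
          ← ENNReal.ofReal_mul (by positivity)]
        congr 1
        ring

end CDFDistance

section Bellman

variable {X : Type*} [Fintype X] [MeasurableSpace X] [MeasurableSingletonClass X]
  {P : X → Measure (ℝ × X)} {γ : ℝ}

lemma measurable_measure_preimage_of_countable {α : Type*} [MeasurableSpace α]
    (η : X → Measure ℝ) [∀ x, IsProbabilityMeasure (η x)] {f : α → X} (hf : Measurable f)
    {t : Set (α × ℝ)} (ht : MeasurableSet t) :
    Measurable fun a => η (f a) (Prod.mk a ⁻¹' t) := by
  let κ : Kernel α ℝ := (Kernel.ofFunOfCountable η).comap f hf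
  have : IsMarkovKernel κ := ⟨fun a => inferInstanceAs (IsProbabilityMeasure (η (f a)))⟩
  exact Kernel.measurable_kernel_prodMk_left (κ := κ) ht

lemma measurable_bellman_integrand (γ : ℝ) (η : X → Measure ℝ)
    [∀ x, IsProbabilityMeasure (η x)] :
    Measurable fun p : ℝ × X => (η p.2).map (fun z => p.1 + γ * z) := by
  refine Measure.measurable_of_measurable_coe _ fun s hs => ?_
  have hmap : ∀ p : ℝ × X, (η p.2).map (fun z => p.1 + γ * z) s
      = η p.2 (Prod.mk p ⁻¹' {q : (ℝ × X) × ℝ | q.1.1 + γ * q.2 ∈ s}) := fun p =>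
    Measure.map_apply (by fun_prop) hs
  simp only [hmap]
  refine measurable_measure_preimage_of_countable η measurable_snd ?_
  exact hs.preimage (by fun_prop)

lemma bellman_apply (η : X → Measure ℝ) [∀ x, IsProbabilityMeasure (η x)] (x : X)
    {s : Set ℝ} (hs : MeasurableSet s) :
    bellman P γ η x s = ∫⁻ p, η p.2 ((fun z => p.1 + γ * z) ⁻¹' s) ∂P x := by
  rw [bellman, Measure.bind_apply hs (measurable_bellman_integrand γ η).aemeasurable]
  exact lintegral_congr fun p => Measure.map_apply (by fun_prop) hs

lemma isProbabilityMeasure_bellman [∀ x, IsProbabilityMeasure (P x)] (η : X → Measure ℝ)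
    [∀ x, IsProbabilityMeasure (η x)] (x : X) : IsProbabilityMeasure (bellman P γ η x) := by
  constructor
  rw [bellman_apply η x MeasurableSet.univ]
  simp

lemma bellman_apply_le [∀ x, IsProbabilityMeasure (P x)] (η : X → Measure ℝ)
    [∀ x, IsProbabilityMeasure (η x)] (x : X) {s t : Set ℝ} (hs : MeasurableSet s) {ε : ℝ≥0∞}
    (hst : ∀ᵐ p ∂P x, ∀ z, p.1 + γ * z ∈ s → z ∈ t) (ht : ∀ x', η x' t ≤ ε) :
    bellman P γ η x s ≤ ε := by
  rw [bellman_apply η x hs]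
  calc ∫⁻ p, η p.2 ((fun z => p.1 + γ * z) ⁻¹' s) ∂P x ≤ ∫⁻ _, ε ∂P x := by
        refine lintegral_mono_ae ?_
        filter_upwards [hst] with p hp
        exact (measure_mono fun z hz => hp z hz).trans (ht p.2)
    _ = ε := by simp

lemma bellman_compl_Icc_eq_zero [∀ x, IsProbabilityMeasure (P x)] {Rmin Rmax a b : ℝ}
    (hγ : 0 ≤ γ) (hsupp : ∀ x, ∀ᵐ p ∂P x, p.1 ∈ Icc Rmin Rmax)
    (ha : a ≤ Rmin + γ * a) (hb : Rmax + γ * b ≤ b)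
    (η : X → Measure ℝ) [∀ x, IsProbabilityMeasure (η x)]
    (h : ∀ x, η x (Icc a b)ᶜ = 0) (x : X) : bellman P γ η x (Icc a b)ᶜ = 0 := by
  refine le_antisymm ?_ zero_le
  refine bellman_apply_le η x measurableSet_Icc.compl (t := (Icc a b)ᶜ) ?_ fun x' => (h x').le
  filter_upwards [hsupp x] with p hp z hz hz'
  have h1 := mul_le_mul_of_nonneg_left hz'.1 hγ
  have h2 := mul_le_mul_of_nonneg_left hz'.2 hγ
  exact hz ⟨by linarith [hp.1], by linarith [hp.2]⟩

/-- A fixed point of the Bellman operator is supported on the interval of attainable returns. -/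
lemma fixedPoint_compl_Icc_eq_zero [∀ x, IsProbabilityMeasure (P x)] {a b : ℝ}
    (hγ0 : 0 ≤ γ) (hγ1 : γ < 1)
    (hsupp : ∀ x, ∀ᵐ p ∂P x, p.1 ∈ Icc ((1 - γ) * a) ((1 - γ) * b))
    (η : X → Measure ℝ) [∀ x, IsProbabilityMeasure (η x)] (hfix : bellman P γ η = η) (x : X) :
    η x (Icc a b)ᶜ = 0 := by
  set c := (a + b) / 2 with hc
  set h := (b - a) / 2 with hh
  let S : ℝ → Set ℝ := fun M => {z | h + M < |z - c|}
  have hSm : ∀ M, MeasurableSet (S M) := fun M =>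
    measurableSet_lt measurable_const (by fun_prop)
  obtain ⟨β, hγβ, hβ0, hβ1⟩ : ∃ β, γ ≤ β ∧ 0 < β ∧ β < 1 :=
    ⟨max γ (1 / 2), le_max_left _ _, by positivity, max_lt hγ1 (by norm_num)⟩
  have hstep : ∀ M : ℝ, 0 < M → ∀ ε, (∀ x', η x' (S (M / β)) ≤ ε) → ∀ x', η x' (S M) ≤ ε := by
    intro M hM ε hε x'
    rw [← hfix]
    refine bellman_apply_le η x' (hSm M) ?_ hε
    filter_upwards [hsupp x'] with p hp z hz
    have hz' : h + M < |p.1 + γ * z - c| := hz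
    have hr : |p.1 - (1 - γ) * c| ≤ (1 - γ) * h := by
      rw [abs_le]
      constructor <;> [nlinarith [hp.1]; nlinarith [hp.2]]
    have htri : |p.1 + γ * z - c| ≤ |p.1 - (1 - γ) * c| + γ * |z - c| := by
      have := abs_add_le (p.1 - (1 - γ) * c) (γ * (z - c))
      rw [abs_mul, abs_of_nonneg hγ0] at this
      calc |p.1 + γ * z - c| = |p.1 - (1 - γ) * c + γ * (z - c)| := by ring_nf
        _ ≤ _ := this
    have hlt : M < γ * (|z - c| - h) := by linarith
    have hpos : 0 < |z - c| - h := pos_of_mul_pos_right (hM.trans hlt) hγ0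
    have hdiv : M / β < |z - c| - h := by
      rw [div_lt_iff₀ hβ0]
      nlinarith
    change h + M / β < |z - c|
    linarith
  have hiter : ∀ n : ℕ, ∀ M : ℝ, 0 < M → ∀ ε, (∀ x', η x' (S (M / β ^ n)) ≤ ε) →
      ∀ x', η x' (S M) ≤ ε := by
    intro n
    induction n with
    | zero => intro M _ ε hε; simpa using hε
    | succ n ih =>
      intro M hM ε hε
      refine hstep M hM ε (ih (M / β) (by positivity) ε fun x' => ?_)
      rw [div_div, ← pow_succ']
      exact hε x'
  have hanti : Antitone S := fun M N hMN z hz =>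
    lt_of_le_of_lt (add_le_add_right hMN h) hz
  have htail : ∀ x', Filter.Tendsto (fun n : ℕ => η x' (S n)) Filter.atTop (nhds 0) := by
    intro x'
    have hempty : ⋂ n : ℕ, S n = ∅ := by
      rw [eq_empty_iff_forall_notMem]
      intro z hz
      obtain ⟨n, hn⟩ := exists_nat_gt (|z - c| - h)
      have : h + (n : ℝ) < |z - c| := mem_iInter.1 hz n
      linarith
    have := tendsto_measure_iInter_atTop (μ := η x') (s := fun n : ℕ => S n)
      (fun n => (hSm n).nullMeasurableSet) (fun m n hmn => hanti (by exact_mod_cast hmn))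
      ⟨0, measure_ne_top _ _⟩
    rwa [hempty, measure_empty] at this
  have hzero : ∀ M : ℝ, 0 < M → ∀ x', η x' (S M) = 0 := by
    intro M hM x'
    refine le_antisymm (le_of_forall_gt fun ε hε => ?_) zero_le
    obtain ⟨δ, hδ0, hδε⟩ := exists_between hε
    refine lt_of_le_of_lt ?_ hδε
    have hall : ∀ᶠ n : ℕ in Filter.atTop, ∀ x'', η x'' (S n) < δ :=
      Filter.eventually_all.2 fun x'' => (htail x'').eventually (gt_mem_nhds hδ0)
    obtain ⟨N, hN⟩ := hall.exists
    have hgrow : Filter.Tendsto (fun n : ℕ => M / β ^ n) Filter.atTop Filter.atTop := by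
      have := (tendsto_pow_atTop_atTop_of_one_lt (one_lt_inv_iff₀.2 ⟨hβ0, hβ1⟩)).const_mul_atTop hM
      simpa [div_eq_mul_inv] using this
    obtain ⟨n, hn⟩ := (hgrow.eventually_ge_atTop (N : ℝ)).exists
    exact hiter n M hM δ (fun x'' => (measure_mono (hanti hn)).trans (hN x'').le) x'
  have hunion : (Icc a b)ᶜ ⊆ ⋃ n : ℕ, S (1 / (n + 1)) := by
    intro z hz
    have hlt : 0 < |z - c| - h := by
      by_contra hcon
      have hle : |z - c| ≤ h := by linarith
      rw [abs_le] at hle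
      exact hz ⟨by linarith [hle.1], by linarith [hle.2]⟩
    obtain ⟨n, hn⟩ := exists_nat_one_div_lt hlt
    exact mem_iUnion.2 ⟨n, show h + _ < _ by linarith⟩
  exact measure_mono_null hunion (measure_iUnion_null fun n => hzero _ (by positivity) x)

lemma measurable_cdf_comp (η : X → Measure ℝ) [∀ x, IsProbabilityMeasure (η x)] (γ : ℝ) :
    Measurable fun q : ℝ × (ℝ × X) => cdf (η q.2.2) ((q.1 - q.2.1) / γ) := by
  simp only [cdf_eq_real, measureReal_def]
  refine Measurable.ennreal_toReal ?_
  refine measurable_measure_preimage_of_countable η (f := fun q : ℝ × (ℝ × X) => q.2.2)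
    (by fun_prop) (t := {r | r.2 ≤ (r.1.1 - r.1.2.1) / γ}) ?_
  exact measurableSet_le (by fun_prop) (by fun_prop)

lemma cdf_bellman [∀ x, IsProbabilityMeasure (P x)] (hγ : 0 < γ) (η : X → Measure ℝ)
    [∀ x, IsProbabilityMeasure (η x)] (x : X) (y : ℝ) :
    cdf (bellman P γ η x) y = ∫ p, cdf (η p.2) ((y - p.1) / γ) ∂P x := by
  have := isProbabilityMeasure_bellman (P := P) (γ := γ) η x
  have hmeas : Measurable fun p : ℝ × X => cdf (η p.2) ((y - p.1) / γ) :=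
    (measurable_cdf_comp η γ).comp (measurable_const.prodMk measurable_id)
  rw [cdf_eq_real, measureReal_def, bellman_apply η x measurableSet_Iic,
    integral_eq_lintegral_of_nonneg_ae (ae_of_all _ fun p => cdf_nonneg _ _)
      hmeas.aestronglyMeasurable]
  congr 1
  refine lintegral_congr fun p => ?_
  rw [ofReal_cdf]
  congr 1
  ext z
  simp only [mem_preimage, mem_Iic, le_div_iff₀ hγ]
  constructor <;> intro hz <;> linarith

lemma lintegral_comp_sub_div (hγ : 0 < γ) (r : ℝ) {f : ℝ → ℝ≥0∞} (hf : Measurable f) :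
    ∫⁻ y, f ((y - r) / γ) = ENNReal.ofReal γ * ∫⁻ y, f y := by
  rw [lintegral_sub_right_eq_self (fun y => f (y / γ)) r]
  have hmap := Real.map_volume_mul_right (inv_ne_zero hγ.ne')
  rw [inv_inv, abs_of_pos hγ] at hmap
  rw [← smul_eq_mul, ← lintegral_smul_measure, ← hmap, lintegral_map hf (by fun_prop)]
  simp only [div_eq_mul_inv]

/-- The Bellman operator contracts the supremum of `cdfDist` by the discount factor. -/
lemma cdfDist_bellman_le [∀ x, IsProbabilityMeasure (P x)] (hγ : 0 ≤ γ) (η η' : X → Measure ℝ)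
    [∀ x, IsProbabilityMeasure (η x)] [∀ x, IsProbabilityMeasure (η' x)] {D : ℝ≥0∞}
    (hD : ∀ x, cdfDist (η x) (η' x) ≤ D) (x : X) :
    cdfDist (bellman P γ η x) (bellman P γ η' x) ≤ ENNReal.ofReal γ * D := by
  rcases hγ.eq_or_lt with rfl | hγ
  · have heq : bellman P 0 η x = bellman P 0 η' x := by
      ext s hs
      rw [bellman_apply η x hs, bellman_apply η' x hs]
      refine lintegral_congr fun p => ?_
      by_cases hp : p.1 ∈ s <;> simp [hp]
    rw [heq, cdfDist_self]
    exact zero_le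
  · have hmeas := fun (ζ : X → Measure ℝ) (_ : ∀ x, IsProbabilityMeasure (ζ x)) (y : ℝ) =>
      (measurable_cdf_comp ζ γ).comp
        (measurable_const.prodMk measurable_id : Measurable fun p : ℝ × X => (y, p))
    have hint : ∀ (ζ : X → Measure ℝ) (_ : ∀ x, IsProbabilityMeasure (ζ x)) (y : ℝ),
        Integrable (fun p : ℝ × X => cdf (ζ p.2) ((y - p.1) / γ)) (P x) := by
      intro ζ hζ y
      refine Integrable.of_bound (hmeas ζ hζ y).aestronglyMeasurable 1 (ae_of_all _ fun p => ?_)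
      rw [Real.norm_of_nonneg (cdf_nonneg _ _)]
      exact cdf_le_one _ _
    calc cdfDist (bellman P γ η x) (bellman P γ η' x)
        ≤ ∫⁻ y, ∫⁻ p, ENNReal.ofReal
            |cdf (η p.2) ((y - p.1) / γ) - cdf (η' p.2) ((y - p.1) / γ)| ∂P x := by
          refine lintegral_mono fun y => ?_
          rw [cdf_bellman hγ, cdf_bellman hγ,
            ← integral_sub (hint η inferInstance y) (hint η' inferInstance y)]
          simp only [← Real.norm_eq_abs, ofReal_norm]
          exact enorm_integral_le_lintegral_enorm _
      _ = ∫⁻ p, (∫⁻ y, ENNReal.ofReal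
            |cdf (η p.2) ((y - p.1) / γ) - cdf (η' p.2) ((y - p.1) / γ)|) ∂P x := by
          refine lintegral_lintegral_swap (Measurable.aemeasurable ?_)
          exact ((measurable_cdf_comp η γ).sub (measurable_cdf_comp η' γ)).norm.ennreal_ofReal
      _ = ∫⁻ p, ENNReal.ofReal γ * cdfDist (η p.2) (η' p.2) ∂P x := by
          refine lintegral_congr fun p => ?_
          exact lintegral_comp_sub_div hγ p.1
            (f := fun y => ENNReal.ofReal |cdf (η p.2) y - cdf (η' p.2) y|)
            (((measurable_cdf_apply _).sub (measurable_cdf_apply _)).norm.ennreal_ofReal)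
      _ ≤ ∫⁻ _, ENNReal.ofReal γ * D ∂P x :=
          lintegral_mono fun p => mul_le_mul_right (hD p.2) _
      _ = ENNReal.ofReal γ * D := by simp

end Bellman

/-- Instance-dependent approximation bound: for any `k ≥ 1`,
`w̄_1((Π^λ T^π)^k η^π, η^π) ≤ (V_max − V_min)(1 − γ^k)/(2m(1−γ))` (stated coordinatewise over
states); in particular, if `η̂^π_λ = (Π^λ T^π)^k η^π`, then the QDP fixed point satisfies this
bound. -/
theorem qdp_instance_dependent_bound
    {X : Type*} [Fintype X] [MeasurableSpace X] [MeasurableSingletonClass X]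
    (P : X → Measure (ℝ × X)) (hP : ∀ x, IsProbabilityMeasure (P x))
    (γ : ℝ) (hγ0 : 0 ≤ γ) (hγ1 : γ < 1)
    (Rmin Rmax : ℝ) (hR : Rmin ≤ Rmax)
    (hsupp : ∀ x, P x {p : ℝ × X | p.1 ∈ Set.Icc Rmin Rmax}ᶜ = 0)
    (ηπ : X → Measure ℝ) (hηπ : ∀ x, IsProbabilityMeasure (ηπ x))
    (hfix : bellman P γ ηπ = ηπ)
    (huniq : ∀ η : X → Measure ℝ, (∀ x, IsProbabilityMeasure (η x)) →
      bellman P γ η = η → η = ηπ)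
    {m : ℕ} (hm : 0 < m) (lam : X → Fin m → ℝ) (hlam : lam ∈ unitCube X m) :
    (∀ k : ℕ, 1 ≤ k → ∀ x,
      w1 (((fun η => proj lam (bellman P γ η))^[k] ηπ) x) (ηπ x)
        ≤ (Rmax / (1 - γ) - Rmin / (1 - γ)) * (1 - γ ^ k) / (2 * m * (1 - γ)))
    ∧ (∀ (ηhat : X → Measure ℝ) (k : ℕ), 1 ≤ k →
        ηhat = (fun η => proj lam (bellman P γ η))^[k] ηπ →
        ∀ x, w1 (ηhat x) (ηπ x)
          ≤ (Rmax / (1 - γ) - Rmin / (1 - γ)) * (1 - γ ^ k) / (2 * m * (1 - γ))) := by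
  have hsupp' : ∀ x, ∀ᵐ p ∂P x, p.1 ∈ Icc Rmin Rmax := fun x => hsupp x
  have hγ : 0 < 1 - γ := sub_pos.2 hγ1
  set a := Rmin / (1 - γ) with ha
  set b := Rmax / (1 - γ) with hb
  have hRa : (1 - γ) * a = Rmin := mul_div_cancel₀ _ hγ.ne'
  have hRb : (1 - γ) * b = Rmax := mul_div_cancel₀ _ hγ.ne'
  have hab : a ≤ b := div_le_div_of_nonneg_right hR hγ.le
  have hbound : ∀ k : ℕ, 0 ≤ (b - a) * (1 - γ ^ k) / (2 * m * (1 - γ)) := fun k =>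
    div_nonneg (mul_nonneg (sub_nonneg.2 hab) (sub_nonneg.2 (pow_le_one₀ hγ0 hγ1.le)))
      (by positivity)
  have hηsupp := fixedPoint_compl_Icc_eq_zero (a := a) (b := b) hγ0 hγ1
    (by rwa [hRa, hRb]) ηπ hfix
  have hinv : ∀ k : ℕ, ∀ x,
      IsProbabilityMeasure ((fun η => proj lam (bellman P γ η))^[k] ηπ x)
      ∧ (fun η => proj lam (bellman P γ η))^[k] ηπ x (Icc a b)ᶜ = 0
      ∧ cdfDist ((fun η => proj lam (bellman P γ η))^[k] ηπ x) (ηπ x)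
        ≤ ENNReal.ofReal ((b - a) * (1 - γ ^ k) / (2 * m * (1 - γ))) := by
    intro k
    induction k with
    | zero => exact fun x => ⟨hηπ x, hηsupp x, by simp [cdfDist_self]⟩
    | succ k ih =>
      intro x
      rw [Function.iterate_succ_apply']
      set ζ := (fun η => proj lam (bellman P γ η))^[k] ηπ
      have hζ : ∀ x, IsProbabilityMeasure (ζ x) := fun x => (ih x).1
      have hTζ := isProbabilityMeasure_bellman (P := P) (γ := γ) ζ
      have hTsupp := bellman_compl_Icc_eq_zero (P := P) hγ0 hsupp' (a := a) (b := b)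
        (by linarith) (by linarith) ζ (fun x => (ih x).2.1) x
      refine ⟨isProbabilityMeasure_paramDistOne hm _,
        proj_compl_Icc_eq_zero hm hlam _ x hTsupp, ?_⟩
      have hcontr := cdfDist_bellman_le (P := P) hγ0 ζ ηπ (fun x => (ih x).2.2) x
      rw [hfix] at hcontr
      refine (cdfDist_triangle _ (bellman P γ ζ x) _).trans
        ((add_le_add (cdfDist_proj_le hm hlam _ x hTsupp) hcontr).trans ?_)
      have hm' : (m : ℝ) ≠ 0 := by exact_mod_cast hm.ne'
      rw [← ENNReal.ofReal_mul hγ0, ← ENNReal.ofReal_add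
        (div_nonneg (sub_nonneg.2 hab) (by positivity)) (mul_nonneg hγ0 (hbound k))]
      refine ENNReal.ofReal_le_ofReal (le_of_eq ?_)
      field_simp
      ring
  have hmain : ∀ k : ℕ, ∀ x, w1 ((fun η => proj lam (bellman P γ η))^[k] ηπ x) (ηπ x)
      ≤ (b - a) * (1 - γ ^ k) / (2 * m * (1 - γ)) := fun k x =>
    w1_le_of_cdfDist_le (hbound k) (hinv k x).2.2
  exact ⟨fun k _ x => hmain k x, fun ηhat k _ hk x => hk ▸ hmain k x⟩
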